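/- Assume α, β > −1 and let ρ(θ;N) = (1 − cos(Nθ))^{α+1/2}·(1 + cos(Nθ))^{β+1/2}. Then the operator L(N) is symmetric with respect to the weight ρ(θ;N) on the unit circle: for all Laurent polynomials f and g with complex coefficients (viewed as functions on ℂ∖{0}), ∫_0^{2π} (L(N)f)(e^{iθ})·conj(g(e^{iθ}))·ρ(θ;N) dθ = ∫_0^{2π} f(e^{iθ})·conj((L(N)g)(e^{iθ}))·ρ(θ;N) dθ, where the integrands are defined for all θ with e^{2iNθ} ≠ 1, i.e. for almost every θ. -/

import Mathlib

open Finset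

/-- Monic OPUC associated to a sequence of (real) Verblunsky parameters. -/
noncomputable def Phi (c : ℕ → ℝ) : ℕ → ℂ → ℂ
  | 0, _ => 1
  | n + 1, z => z * Phi c n z - (c n : ℂ) * z ^ n * Phi c n z⁻¹

/-- CMV Laurent polynomials: ψ_{2m} z = z^m Φ_{2m}(1/z), ψ_{2m+1} z = z^{-m} Φ_{2m+1}(z). -/
noncomputable def psi (c : ℕ → ℝ) (n : ℕ) (z : ℂ) : ℂ :=
  if Even n then z ^ (n / 2) * Phi c n z⁻¹
  else z ^ (-((n / 2 : ℕ) : ℤ)) * Phi c n z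

/-- Verblunsky parameters of the Jacobi OPUC. -/
noncomputable def jacobiA (α β : ℝ) (n : ℕ) : ℝ :=
  -(α + 1 / 2 + (-1 : ℝ) ^ (n + 1) * (β + 1 / 2)) / (n + α + β + 2)

/-- Sieved Verblunsky parameters: a_n(N) = a_{k-1} if n = N k - 1 (k ≥ 1), 0 otherwise. -/
noncomputable def sievedA (α β : ℝ) (N n : ℕ) : ℝ :=
  if N ∣ (n + 1) then jacobiA α β ((n + 1) / N - 1) else 0

/-- The primitive N-th root of unity q = exp(2πi/N). -/
noncomputable def qN (N : ℕ) : ℂ := Complex.exp (2 * Real.pi * Complex.I / N)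

/-- The coefficients A_k(z;N) of the Dunkl-type operator L(N). -/
noncomputable def Acoef (α β : ℝ) (N k : ℕ) (z : ℂ) : ℂ :=
  if Even N then
    ((α : ℂ) + β + 1 + (-1 : ℂ) ^ k * ((α : ℂ) - β)) * z ^ 2 / (qN N ^ k - z ^ 2)
  else
    (((α : ℂ) + β + 1) * z ^ 2 +
        (if Even k then qN N ^ ((k : ℤ) / 2) else qN N ^ (((k : ℤ) - (N : ℤ)) / 2)) *
          ((α : ℂ) - β) * z) /
      (qN N ^ k - z ^ 2)

/-- B(z) = N((α+β+1) z^{2N} + (α-β) z^N)/(z^{2N} - 1). -/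
noncomputable def Bfun (α β : ℝ) (N : ℕ) (z : ℂ) : ℂ :=
  (N : ℂ) * (((α : ℂ) + β + 1) * z ^ (2 * N) + ((α : ℂ) - β) * z ^ N) / (z ^ (2 * N) - 1)

/-- The Dunkl-type operator L(N). -/
noncomputable def Lop (α β : ℝ) (N : ℕ) (f : ℂ → ℂ) : ℂ → ℂ := fun z =>
  z * deriv f z + ∑ k ∈ Finset.range N, Acoef α β N k z * (f (qN N ^ k / z) - f z)

/-- A function ℂ∖{0} → ℂ is a Laurent polynomial. -/
def IsLaurentPoly (f : ℂ → ℂ) : Prop :=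
  ∃ (m : ℕ) (p : Polynomial ℂ), ∀ z : ℂ, z ≠ 0 → f z = Polynomial.eval z p / z ^ m

/-- Sieved Jacobi polynomial of the first kind, as a function of z (x = z + 1/z). -/
noncomputable def sievP (α β : ℝ) (N n : ℕ) (z : ℂ) : ℂ :=
  psi (sievedA α β N) (2 * n) z
    + (1 + (sievedA α β N (2 * n - 1) : ℂ)) * psi (sievedA α β N) (2 * n - 1) z

/-- χ_n(z) = (z - 1/z) Q_{n-1}(x(z)), with Q the sieved Jacobi polynomial of 2nd kind. -/
noncomputable def sievChi (α β : ℝ) (N n : ℕ) (z : ℂ) : ℂ :=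
  -psi (sievedA α β N) (2 * n) z
    + (1 - (sievedA α β N (2 * n - 1) : ℂ)) * psi (sievedA α β N) (2 * n - 1) z

/-!
On the circle, the symmetry defect `L f * conj g - f * conj (L g)` is the defect of `z d/dz`, plus
terms coming from the reflections `z ↦ ω / z`, plus a multiple of `f * conj g` whose coefficient
`B(z) - B(1 / z)` changes sign under reflections. Since `conj A_k(z) = A_k(q ^ k / z)`, the terms
coming from the reflections cancel when the defect is summed over an orbit of the dihedral group,
which preserves the weight `ρ`. If `O` denotes the alternating orbit sum of `f * conj g`, then what
remains of the orbit sum, times `i * ρ`, is the derivative of `O * ρ` in the angle. All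
singularities of `ρ` are fixed points of reflections, where `O` vanishes, so `O * ρ` is continuous;
it vanishes at both endpoints, hence its derivative integrates to `0`.
-/

open MeasureTheory Filter Topology Asymptotics
open Complex (exp I)
open scoped ComplexConjugate

/-! ### Sums over the roots of unity -/

section RootsOfUnity

lemma coe_rootsOfUnity_pow_eq_one {N : ℕ} (ζ : rootsOfUnity N ℂ) : ((ζ : ℂˣ) : ℂ) ^ N = 1 :=
  (mem_rootsOfUnity' N _).1 ζ.2

lemma isPrimitiveRoot_qN (N : ℕ) [NeZero N] : IsPrimitiveRoot (qN N) N :=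
  Complex.isPrimitiveRoot_exp N (NeZero.ne N)

variable {N : ℕ} [NeZero N]

noncomputable instance fintypeRootsOfUnity : Fintype (rootsOfUnity N ℂ) := Fintype.ofFinite _

lemma norm_coe_rootsOfUnity (ζ : rootsOfUnity N ℂ) : ‖((ζ : ℂˣ) : ℂ)‖ = 1 :=
  Complex.norm_eq_one_of_mem_rootsOfUnity ζ.2

lemma sum_range_qN_pow {M : Type*} [AddCommMonoid M] (φ : ℂ → M) :
    ∑ k ∈ range N, φ (qN N ^ k) = ∑ ζ : rootsOfUnity N ℂ, φ (ζ : ℂˣ) := by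
  have hq := isPrimitiveRoot_qN N
  refine sum_nbij (fun k => hq.toRootsOfUnity ^ k) (fun _ _ => mem_univ _) ?_ ?_ fun k _ => ?_
  · intro i hi j hj hij
    have hpow : qN N ^ i = qN N ^ j := by simpa [Subtype.ext_iff, Units.ext_iff] using hij
    exact hq.pow_inj (by simpa using hi) (by simpa using hj) hpow
  · intro ζ _
    obtain ⟨i, hi, hζ⟩ := hq.eq_pow_of_pow_eq_one (coe_rootsOfUnity_pow_eq_one ζ)
    exact ⟨i, by simpa using hi, rootsOfUnity.coe_injective (by simpa using hζ)⟩
  · simp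

lemma sum_rootsOfUnity_pow (i : ℕ) :
    ∑ ζ : rootsOfUnity N ℂ, ((ζ : ℂˣ) : ℂ) ^ i = if N ∣ i then (N : ℂ) else 0 := by
  have hq := isPrimitiveRoot_qN N
  simp_rw [← sum_range_qN_pow (fun ζ => ζ ^ i), ← pow_mul, mul_comm _ i, pow_mul]
  split_ifs with h
  · simp [(hq.pow_eq_one_iff_dvd i).2 h]
  · rw [geom_sum_eq (mt (hq.pow_eq_one_iff_dvd i).1 h), ← pow_mul, mul_comm, pow_mul,
      hq.pow_eq_one, one_pow, sub_self, zero_div]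

-- Since `1 - u ^ N = ζ ^ N - u ^ N`, clearing denominators leaves a geometric sum in each term.
lemma sum_rootsOfUnity_pow_div_sub {m : ℕ} (hm : 1 ≤ m) (hmN : m ≤ N) {u : ℂ} (hu : u ^ N ≠ 1) :
    ∑ ζ : rootsOfUnity N ℂ, ((ζ : ℂˣ) : ℂ) ^ m / ((ζ : ℂˣ) - u)
      = N * u ^ (m - 1) / (1 - u ^ N) := by
  have hterm (ζ : rootsOfUnity N ℂ) : ((ζ : ℂˣ) : ℂ) ^ m / ((ζ : ℂˣ) - u) * (1 - u ^ N)
      = ∑ i ∈ range N, ((ζ : ℂˣ) : ℂ) ^ (i + m) * u ^ (N - 1 - i) := by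
    have hζ := coe_rootsOfUnity_pow_eq_one ζ
    have hne : ((ζ : ℂˣ) : ℂ) - u ≠ 0 := fun h => hu (sub_eq_zero.1 h ▸ hζ)
    rw [← hζ, ← (Commute.all ((ζ : ℂˣ) : ℂ) u).geom_sum₂_mul N, mul_comm, mul_assoc,
      mul_div_cancel₀ _ hne, sum_mul]
    exact sum_congr rfl fun i _ => by ring
  rw [eq_div_iff (sub_ne_zero.2 hu.symm), sum_mul]
  simp_rw [hterm]
  rw [sum_comm]
  simp_rw [← sum_mul, sum_rootsOfUnity_pow]
  rw [sum_eq_single_of_mem (N - m) (mem_range.2 (by omega))]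
  · rw [if_pos (by rw [Nat.sub_add_cancel hmN]), show N - 1 - (N - m) = m - 1 by omega]
  · intro i hi hne
    rw [mem_range] at hi
    rw [if_neg, zero_mul]
    intro hdvd
    have := Nat.eq_of_dvd_of_lt_two_mul (by omega) hdvd (by omega)
    omega

end RootsOfUnity

/-! ### Sums over dihedral orbits -/

section DihedralSum

variable {K : Type*} [Field K] (G : Subgroup Kˣ) [Fintype G]

/-- Sum of `φ` over the orbit of `z` under the group generated by the rotations `z ↦ ζ z` and the
reflections `z ↦ ζ / z`, for `ζ` in a finite group `G` of units; the dihedral group of order `2 N`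
when `G` consists of the `N`-th roots of unity. -/
def dihedralSum (φ : K → K) (z : K) : K :=
  ∑ ζ : G, (φ ((ζ : Kˣ) * z) + φ ((ζ : Kˣ) / z))

/-- The orbit sum `dihedralSum`, with reflections counted negatively. -/
def dihedralAltSum (φ : K → K) (z : K) : K :=
  ∑ ζ : G, (φ ((ζ : Kˣ) * z) - φ ((ζ : Kˣ) / z))

variable {G}

lemma dihedralSum_comp_div (φ : K → K) (ω : G) (z : K) :
    dihedralSum G (fun w => φ ((ω : Kˣ) / w)) z = dihedralSum G φ z := by
  have hrot := (Equiv.divLeft ω).sum_comp fun ζ : G => φ ((ζ : Kˣ) * z)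
  have hrefl := (Equiv.divLeft ω).sum_comp fun ζ : G => φ ((ζ : Kˣ) / z)
  simp only [Equiv.divLeft_apply, Subgroup.coe_div, Units.val_div_eq_div_val] at hrot hrefl
  simp only [dihedralSum, sum_add_distrib, ← hrot, ← hrefl, div_div, div_div_eq_mul_div,
    div_mul_eq_mul_div]
  exact add_comm _ _

lemma dihedralSum_congr {φ ψ : K → K} {z : K} (hrot : ∀ ζ : G, φ ((ζ : Kˣ) * z) = ψ ((ζ : Kˣ) * z))
    (hrefl : ∀ ζ : G, φ ((ζ : Kˣ) / z) = ψ ((ζ : Kˣ) / z)) :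
    dihedralSum G φ z = dihedralSum G ψ z := by
  simp only [dihedralSum, hrot, hrefl]

lemma dihedralSum_add (φ ψ : K → K) (z : K) :
    dihedralSum G (fun w => φ w + ψ w) z = dihedralSum G φ z + dihedralSum G ψ z := by
  simp only [dihedralSum, sum_add_distrib]
  ring

lemma dihedralSum_sub (φ ψ : K → K) (z : K) :
    dihedralSum G (fun w => φ w - ψ w) z = dihedralSum G φ z - dihedralSum G ψ z := by
  simp only [dihedralSum, sum_add_distrib, sum_sub_distrib]
  ring

lemma dihedralSum_sum {ι : Type*} (s : Finset ι) (φ : ι → K → K) (z : K) :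
    dihedralSum G (fun w => ∑ i ∈ s, φ i w) z = ∑ i ∈ s, dihedralSum G (φ i) z := by
  simp only [dihedralSum, ← sum_add_distrib]
  exact sum_comm

lemma dihedralSum_mul_of_antisymm {D : K → K} {z : K} (hrot : ∀ ζ : G, D ((ζ : Kˣ) * z) = D z)
    (hrefl : ∀ ζ : G, D ((ζ : Kˣ) / z) = -D z) (φ : K → K) :
    dihedralSum G (fun w => D w * φ w) z = D z * dihedralAltSum G φ z := by
  simp only [dihedralSum, dihedralAltSum, hrot, hrefl, mul_sum]
  exact sum_congr rfl fun ζ _ => by ring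

lemma dihedralAltSum_eq_zero_of_sq_mem {z : K} {ω : G} (hω : ((ω : Kˣ) : K) = z ^ 2)
    (φ : K → K) : dihedralAltSum G φ z = 0 := by
  have : z ≠ 0 := by
    rintro rfl
    simp at hω
  have hrefl := (Equiv.divRight ω).sum_comp fun ζ : G => φ ((ζ : Kˣ) * z)
  rw [dihedralAltSum, sum_sub_distrib, ← hrefl, sub_eq_zero]
  refine sum_congr rfl fun ζ _ => ?_
  simp only [Equiv.divRight_apply, Subgroup.coe_div, Units.val_div_eq_div_val, hω]
  field_simp

end DihedralSum

/-! ### The Dunkl-type operator on the unit circle -/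

lemma conj_eq_inv_of_norm_eq_one {z : ℂ} (hz : ‖z‖ = 1) : conj z = z⁻¹ :=
  (Complex.inv_eq_conj hz).symm

lemma ne_zero_of_norm_eq_one {z : ℂ} (hz : ‖z‖ = 1) : z ≠ 0 :=
  norm_ne_zero_iff.1 (hz ▸ one_ne_zero)

/-- The coefficient of the reflection `z ↦ ω / z` in `L(N)`, where `ω ^ N = 1`. A single formula
covers both parities of `N` because the exponents `(N + 1) / 2` and `2 - N % 2` are `N / 2` and `2`
for even `N`, and `(N + 1) / 2` and `1` for odd `N`; in both cases `2 * ((N + 1) / 2) + (2 - N % 2)`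
equals `N + 2`. -/
noncomputable def dunklCoeff (α β : ℝ) (N : ℕ) (ω z : ℂ) : ℂ :=
  ((α + β + 1) * z ^ 2 + (α - β) * ω ^ ((N + 1) / 2) * z ^ (2 - N % 2)) / (ω - z ^ 2)

lemma conj_Bfun (α β : ℝ) (N : ℕ) {z : ℂ} (hz : ‖z‖ = 1) :
    conj (Bfun α β N z) = Bfun α β N z⁻¹ := by
  simp [Bfun, conj_eq_inv_of_norm_eq_one hz]

lemma Bfun_mul_of_pow_eq_one (α β : ℝ) {N : ℕ} {ζ : ℂ} (hζ : ζ ^ N = 1) (z : ℂ) :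
    Bfun α β N (ζ * z) = Bfun α β N z := by
  simp [Bfun, mul_pow, mul_comm 2 N, pow_mul, hζ]

lemma qN_pow_half_of_even {N : ℕ} [NeZero N] (hN : Even N) : qN N ^ (N / 2) = -1 :=
  ((isPrimitiveRoot_qN N).pow (NeZero.pos N)
    (Nat.div_mul_cancel hN.two_dvd).symm).eq_neg_one_of_two_right

-- The exponents on the two sides differ by a multiple of `N`.
lemma qN_zpow_half_of_odd {N : ℕ} [NeZero N] (hN : Odd N) (k : ℕ) :
    (if Even k then qN N ^ ((k : ℤ) / 2) else qN N ^ (((k : ℤ) - (N : ℤ)) / 2))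
      = (qN N ^ k) ^ ((N + 1) / 2) := by
  have hq := isPrimitiveRoot_qN N
  obtain ⟨n, rfl⟩ := hN
  rw [← apply_ite (qN (2 * n + 1) ^ · : ℤ → ℂ), ← pow_mul, ← zpow_natCast]
  have hexp (l : ℤ) (e : ℤ) : qN (2 * n + 1) ^ (e + (2 * n + 1 : ℕ) * l) = qN (2 * n + 1) ^ e := by
    rw [zpow_add₀ (hq.ne_zero (by omega)), zpow_mul, zpow_natCast, hq.pow_eq_one, one_zpow, mul_one]
  rw [show (2 * n + 1 + 1) / 2 = n + 1 by omega]
  rcases Nat.even_or_odd' k with ⟨l, rfl | rfl⟩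
  · rw [if_pos (even_two_mul l), ← hexp l, show ((2 * l : ℕ) : ℤ) / 2 = l by omega]
    congr 1
    push_cast
    ring
  · rw [if_neg (by simp), ← hexp (l + 1),
      show (((2 * l + 1 : ℕ) : ℤ) - (2 * n + 1 : ℕ)) / 2 = l - n by omega]
    congr 1
    push_cast
    ring

section DunklOperator

variable (α β : ℝ) {N : ℕ} [NeZero N]

lemma Acoef_eq_dunklCoeff (k : ℕ) (z : ℂ) :
    Acoef α β N k z = dunklCoeff α β N (qN N ^ k) z := by
  rcases Nat.even_or_odd N with hN | hN
  · have hexp : (N + 1) / 2 = N / 2 := by grind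
    rw [Acoef, if_pos hN, dunklCoeff, hexp, ← pow_mul, mul_comm k, pow_mul, qN_pow_half_of_even hN,
      Nat.even_iff.1 hN]
    ring
  · rw [Acoef, if_neg (Nat.not_even_iff_odd.2 hN), dunklCoeff, qN_zpow_half_of_odd hN,
      Nat.odd_iff.1 hN]
    ring

lemma sum_dunklCoeff {z : ℂ} (hz : z ^ (2 * N) ≠ 1) :
    ∑ ω : rootsOfUnity N ℂ, dunklCoeff α β N (ω : ℂˣ) z = -Bfun α β N z := by
  have hN : 1 ≤ N := NeZero.one_le
  have hz' : (z ^ 2) ^ N ≠ 1 := by rwa [← pow_mul]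
  have hfirst := sum_rootsOfUnity_pow_div_sub hN le_rfl hz'
  have hsecond := sum_rootsOfUnity_pow_div_sub (m := (N + 1) / 2) (by omega) (by omega) hz'
  simp only [coe_rootsOfUnity_pow_eq_one] at hfirst
  have hpow₁ : z ^ 2 * z ^ (2 * (N - 1)) = z ^ (2 * N) := by rw [← pow_add]; congr 1; omega
  have hpow₂ : z ^ (2 - N % 2) * z ^ (2 * ((N + 1) / 2 - 1)) = z ^ N := by
    rw [← pow_add]; congr 1; omega
  calc ∑ ω : rootsOfUnity N ℂ, dunklCoeff α β N (ω : ℂˣ) z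
      = (α + β + 1) * z ^ 2 * ∑ ω : rootsOfUnity N ℂ, 1 / ((ω : ℂˣ) - z ^ 2)
        + (α - β) * z ^ (2 - N % 2) *
          ∑ ω : rootsOfUnity N ℂ, ((ω : ℂˣ) : ℂ) ^ ((N + 1) / 2) / ((ω : ℂˣ) - z ^ 2) := by
        rw [mul_sum, mul_sum, ← sum_add_distrib]
        exact sum_congr rfl fun ω _ => by rw [dunklCoeff]; ring
    _ = N * ((α + β + 1) * (z ^ 2 * z ^ (2 * (N - 1)))
          + (α - β) * (z ^ (2 - N % 2) * z ^ (2 * ((N + 1) / 2 - 1)))) / (1 - z ^ (2 * N)) := by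
        rw [hfirst, hsecond, ← pow_mul, ← pow_mul, ← pow_mul]
        ring
    _ = -Bfun α β N z := by
        rw [hpow₁, hpow₂, Bfun, ← div_neg, neg_sub]

lemma conj_dunklCoeff (ω : rootsOfUnity N ℂ) {z : ℂ} (hz : ‖z‖ = 1) :
    conj (dunklCoeff α β N (ω : ℂˣ) z) = dunklCoeff α β N (ω : ℂˣ) ((ω : ℂˣ) / z) := by
  have hω := coe_rootsOfUnity_pow_eq_one ω
  have hω' := norm_coe_rootsOfUnity ω
  have hz0 := ne_zero_of_norm_eq_one hz
  have hω0 := ne_zero_of_norm_eq_one hω'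
  generalize ((ω : ℂˣ) : ℂ) = u at *
  have hinv : u⁻¹ ^ ((N + 1) / 2) = u ^ ((N + 1) / 2) * u ^ (2 - N % 2) / u ^ 2 := by
    rw [inv_pow, inv_eq_iff_eq_inv, inv_div, eq_div_iff (by positivity), ← pow_add, ← pow_add,
      show (N + 1) / 2 + ((N + 1) / 2 + (2 - N % 2)) = N + 2 by omega, pow_add, hω, one_mul]
  have hden : u⁻¹ - z⁻¹ ^ 2 = (u - (u / z) ^ 2) / u ^ 2 := by field_simp
  have hnum : ((α : ℂ) + β + 1) * z⁻¹ ^ 2 + (α - β) * u⁻¹ ^ ((N + 1) / 2) * z⁻¹ ^ (2 - N % 2)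
      = ((α + β + 1) * (u / z) ^ 2 + (α - β) * u ^ ((N + 1) / 2) * (u / z) ^ (2 - N % 2))
        / u ^ 2 := by
    rw [hinv, div_pow, div_pow, inv_pow, inv_pow]
    field_simp
  simp only [dunklCoeff, map_div₀, map_add, map_sub, map_mul, map_pow, Complex.conj_ofReal,
    map_one, conj_eq_inv_of_norm_eq_one hz, conj_eq_inv_of_norm_eq_one hω']
  rw [hden, hnum, div_div_div_cancel_right₀ (pow_ne_zero 2 hω0)]

lemma Lop_eq_add_sum (f : ℂ → ℂ) (z : ℂ) :
    Lop α β N f z = z * deriv f z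
      + ∑ ω : rootsOfUnity N ℂ, dunklCoeff α β N (ω : ℂˣ) z * (f ((ω : ℂˣ) / z) - f z) := by
  simp only [Lop, Acoef_eq_dunklCoeff]
  rw [sum_range_qN_pow fun ω => dunklCoeff α β N ω z * (f (ω / z) - f z)]

end DunklOperator

/-! ### The symmetry defect -/

/-- The pointwise obstruction `T f * conj g - f * conj (T g)` to the symmetry of an operator `T`. -/
noncomputable def symmDefect (T : (ℂ → ℂ) → ℂ → ℂ) (f g : ℂ → ℂ) (z : ℂ) : ℂ :=
  T f z * conj (g z) - f z * conj (T g z)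

/-- The Euler operator `z d/dz`, the differential part of `L(N)`. -/
noncomputable def eulerOp (f : ℂ → ℂ) (z : ℂ) : ℂ := z * deriv f z

/-- The contribution of the reflection `z ↦ ω / z` to `L(N) f * conj g`. -/
noncomputable def crossTerm (α β : ℝ) (N : ℕ) (f g : ℂ → ℂ) (ω z : ℂ) : ℂ :=
  dunklCoeff α β N ω z * f (ω / z) * conj (g z)

section SymmDefect

variable (α β : ℝ) {N : ℕ} [NeZero N] (f g : ℂ → ℂ) {z : ℂ}

lemma Lop_eq_of_pow_ne_one (hzN : z ^ (2 * N) ≠ 1) :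
    Lop α β N f z = eulerOp f z
      + ∑ ω : rootsOfUnity N ℂ, dunklCoeff α β N (ω : ℂˣ) z * f ((ω : ℂˣ) / z)
      + Bfun α β N z * f z := by
  simp only [Lop_eq_add_sum, mul_sub, sum_sub_distrib, ← sum_mul, sum_dunklCoeff α β hzN, eulerOp]
  ring

lemma crossTerm_reflect (ω : rootsOfUnity N ℂ) (hz : ‖z‖ = 1) :
    crossTerm α β N f g (ω : ℂˣ) ((ω : ℂˣ) / z)
      = f z * conj (dunklCoeff α β N (ω : ℂˣ) z * g ((ω : ℂˣ) / z)) := by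
  rw [crossTerm, map_mul, conj_dunklCoeff α β ω hz,
    div_div_cancel₀ (ne_zero_of_norm_eq_one (norm_coe_rootsOfUnity ω))]
  ring

lemma symmDefect_Lop (hz : ‖z‖ = 1) (hzN : z ^ (2 * N) ≠ 1) :
    symmDefect (Lop α β N) f g z = symmDefect eulerOp f g z
      + ∑ ω : rootsOfUnity N ℂ,
          (crossTerm α β N f g (ω : ℂˣ) z - crossTerm α β N f g (ω : ℂˣ) ((ω : ℂˣ) / z))
      + (Bfun α β N z - Bfun α β N z⁻¹) * (f z * conj (g z)) := by
  have hright : f z * conj (Lop α β N g z) = f z * conj (eulerOp g z)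
      + ∑ ω : rootsOfUnity N ℂ, f z * conj (dunklCoeff α β N (ω : ℂˣ) z * g ((ω : ℂˣ) / z))
      + Bfun α β N z⁻¹ * (f z * conj (g z)) := by
    rw [Lop_eq_of_pow_ne_one α β g hzN, map_add, map_add, map_sum, map_mul _ (Bfun α β N z),
      conj_Bfun α β N hz, mul_add, mul_add, mul_sum]
    ring
  simp only [sum_sub_distrib, crossTerm_reflect α β f g _ hz]
  rw [symmDefect, hright, Lop_eq_of_pow_ne_one α β f hzN]
  simp only [symmDefect, crossTerm, ← sum_mul]
  ring

-- Summing over the orbit cancels each cross term against its reflection.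
lemma dihedralSum_symmDefect_Lop (hz : ‖z‖ = 1) (hzN : z ^ (2 * N) ≠ 1) :
    dihedralSum (rootsOfUnity N ℂ) (symmDefect (Lop α β N) f g) z
      = dihedralSum (rootsOfUnity N ℂ) (symmDefect eulerOp f g) z
        + (Bfun α β N z - Bfun α β N z⁻¹)
          * dihedralAltSum (rootsOfUnity N ℂ) (fun w => f w * conj (g w)) z := by
  have hζN (ζ : rootsOfUnity N ℂ) : ((ζ : ℂˣ) : ℂ) ^ (2 * N) = 1 := by
    rw [mul_comm, pow_mul, coe_rootsOfUnity_pow_eq_one, one_pow]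
  have hcongr := dihedralSum_congr (z := z)
    (ψ := fun w => symmDefect eulerOp f g w
      + ∑ ω : rootsOfUnity N ℂ,
          (crossTerm α β N f g (ω : ℂˣ) w - crossTerm α β N f g (ω : ℂˣ) ((ω : ℂˣ) / w))
      + (Bfun α β N w - Bfun α β N w⁻¹) * (f w * conj (g w)))
    (fun ζ : rootsOfUnity N ℂ => symmDefect_Lop α β f g (z := (ζ : ℂˣ) * z)
      (by rw [norm_mul, norm_coe_rootsOfUnity, hz, one_mul]) (by rwa [mul_pow, hζN, one_mul]))
    (fun ζ : rootsOfUnity N ℂ => symmDefect_Lop α β f g (z := (ζ : ℂˣ) / z)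
      (by rw [norm_div, norm_coe_rootsOfUnity, hz, div_one])
      (by rwa [div_pow, hζN, one_div, ne_eq, inv_eq_one]))
  have hrot (ζ : rootsOfUnity N ℂ) (w : ℂ) : Bfun α β N ((ζ : ℂˣ) * w) = Bfun α β N w :=
    Bfun_mul_of_pow_eq_one α β (coe_rootsOfUnity_pow_eq_one ζ) w
  have hrot' (ζ : rootsOfUnity N ℂ) (w : ℂ) :
      Bfun α β N (((ζ : ℂˣ) : ℂ)⁻¹ * w) = Bfun α β N w := by
    simpa using hrot ζ⁻¹ w
  rw [hcongr, dihedralSum_add, dihedralSum_add, dihedralSum_sum, dihedralSum_mul_of_antisymm]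
  · simp only [dihedralSum_sub, dihedralSum_comp_div (crossTerm α β N f g _), sub_self,
      sum_const_zero, add_zero]
  · intro ζ
    rw [mul_inv, hrot, hrot']
  · intro ζ
    rw [inv_div, div_eq_mul_inv, div_eq_inv_mul, hrot, hrot', neg_sub]

end SymmDefect

/-! ### The Jacobi weight -/

lemma intervalIntegrable_one_sub_cos_rpow {r : ℝ} (hr : -(1 / 2) < r) (a b : ℝ) :
    IntervalIntegrable (fun x => (1 - Real.cos x) ^ r) volume a b := by
  rcases le_or_gt 0 r with hr0 | hr0
  · exact ((by fun_prop : Continuous fun x => 1 - Real.cos x).rpow_const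
      fun _ => Or.inr hr0).intervalIntegrable a b
  have hbound : ∀ x ∈ Set.uIoc 0 Real.pi,
      ‖(1 - Real.cos x) ^ r‖ ≤ (2 / Real.pi ^ 2) ^ r * x ^ (2 * r) := by
    intro x hx
    rw [Set.uIoc_of_le Real.pi_pos.le] at hx
    have hcos := Real.cos_le_one_sub_mul_cos_sq (abs_le.2 ⟨by linarith [hx.1, Real.pi_pos], hx.2⟩)
    have hx0 := hx.1
    rw [Real.norm_of_nonneg (Real.rpow_nonneg (sub_nonneg.2 (Real.cos_le_one x)) r),
      Real.rpow_mul hx0.le, Real.rpow_two, ← Real.mul_rpow (by positivity) (by positivity)]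
    exact Real.rpow_le_rpow_of_nonpos (by positivity) (by linarith) hr0.le
  have hmajor : IntervalIntegrable (fun x => (2 / Real.pi ^ 2) ^ r * x ^ (2 * r))
      volume 0 Real.pi :=
    (intervalIntegral.intervalIntegrable_rpow' (by linarith)).const_mul _
  have hhalf : IntervalIntegrable (fun x => (1 - Real.cos x) ^ r) volume 0 Real.pi :=
    hmajor.mono_fun' (by fun_prop : Measurable _).aestronglyMeasurable
      ((ae_restrict_iff' measurableSet_uIoc).2 (ae_of_all _ hbound))
  have hhalf' : IntervalIntegrable (fun x => (1 - Real.cos x) ^ r) volume (-Real.pi) 0 := by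
    simpa using ((IntervalIntegrable.iff_comp_neg).1 hhalf).symm
  have hper : Function.Periodic (fun x => (1 - Real.cos x) ^ r) (2 * Real.pi) := fun x => by
    simp
  refine hper.intervalIntegrable Real.two_pi_pos.ne' (t := -Real.pi) ?_ a b
  rw [show -Real.pi + 2 * Real.pi = Real.pi by ring]
  exact hhalf'.trans hhalf

lemma intervalIntegrable_one_add_cos_rpow {r : ℝ} (hr : -(1 / 2) < r) (a b : ℝ) :
    IntervalIntegrable (fun x => (1 + Real.cos x) ^ r) volume a b := by
  simpa [Real.cos_add_pi] using
    (intervalIntegrable_one_sub_cos_rpow hr (a + Real.pi) (b + Real.pi)).comp_add_right Real.pi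

/-- The Jacobi weight `(1 - cos x) ^ (α + 1 / 2) * (1 + cos x) ^ (β + 1 / 2)` on the unit circle, in
the angular variable. The sieved weight `ρ(θ; N)` is its value at `N * θ`. -/
noncomputable def jacobiWeight (α β x : ℝ) : ℝ :=
  (1 - Real.cos x) ^ (α + 1 / 2) * (1 + Real.cos x) ^ (β + 1 / 2)

/-- The logarithmic derivative of `jacobiWeight`, where `sin x ≠ 0`. -/
noncomputable def jacobiWeightLogDeriv (α β x : ℝ) : ℝ :=
  ((α + β + 1) * Real.cos x + (α - β)) / Real.sin x

section JacobiWeight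

lemma jacobiWeight_periodic (α β : ℝ) : Function.Periodic (jacobiWeight α β) (2 * Real.pi) :=
  fun x => by simp [jacobiWeight]

lemma jacobiWeight_even (α β : ℝ) : Function.Even (jacobiWeight α β) :=
  fun x => by simp [jacobiWeight]

lemma rpow_le_two_rpow_abs {x : ℝ} (h₁ : 1 ≤ x) (h₂ : x ≤ 2) (r : ℝ) : x ^ r ≤ 2 ^ |r| :=
  (Real.rpow_le_rpow_of_exponent_le h₁ (le_abs_self r)).trans
    (Real.rpow_le_rpow (by linarith) h₂ (abs_nonneg r))

-- One of the two bases, whose sum is `2`, is at least `1`.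
lemma norm_jacobiWeight_le (α β x : ℝ) :
    ‖jacobiWeight α β x‖ ≤ 2 ^ |β + 1 / 2| * (1 - Real.cos x) ^ (α + 1 / 2)
      + 2 ^ |α + 1 / 2| * (1 + Real.cos x) ^ (β + 1 / 2) := by
  have hle := Real.cos_le_one x
  have hge := Real.neg_one_le_cos x
  have hA := Real.rpow_nonneg (sub_nonneg.2 hle) (α + 1 / 2)
  have hB := Real.rpow_nonneg (by linarith : 0 ≤ 1 + Real.cos x) (β + 1 / 2)
  rw [jacobiWeight, Real.norm_of_nonneg (mul_nonneg hA hB)]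
  rcases le_total 0 (Real.cos x) with hc | hc
  · have := mul_le_mul_of_nonneg_left
      (rpow_le_two_rpow_abs (by linarith) (by linarith : 1 + Real.cos x ≤ 2) (β + 1 / 2)) hA
    have : 0 ≤ 2 ^ |α + 1 / 2| * (1 + Real.cos x) ^ (β + 1 / 2) := by positivity
    linarith
  · have := mul_le_mul_of_nonneg_right
      (rpow_le_two_rpow_abs (by linarith) (by linarith : 1 - Real.cos x ≤ 2) (α + 1 / 2)) hB
    have : 0 ≤ 2 ^ |β + 1 / 2| * (1 - Real.cos x) ^ (α + 1 / 2) := by positivity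
    linarith

variable {α β : ℝ}

lemma intervalIntegrable_jacobiWeight (hα : -1 < α) (hβ : -1 < β) (a b : ℝ) :
    IntervalIntegrable (jacobiWeight α β) volume a b := by
  have hα' := intervalIntegrable_one_sub_cos_rpow (r := α + 1 / 2) (by linarith) a b
  have hβ' := intervalIntegrable_one_add_cos_rpow (r := β + 1 / 2) (by linarith) a b
  refine ((hα'.const_mul _).add (hβ'.const_mul _)).mono_fun' ?_
    (ae_of_all _ (norm_jacobiWeight_le α β))
  unfold jacobiWeight
  fun_prop

lemma hasDerivAt_jacobiWeight {x : ℝ} (hx : Real.sin x ≠ 0) :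
    HasDerivAt (jacobiWeight α β) (jacobiWeightLogDeriv α β x * jacobiWeight α β x) x := by
  have hsq : Real.sin x ^ 2 = (1 - Real.cos x) * (1 + Real.cos x) := by
    rw [Real.sin_sq]; ring
  have hne := pow_ne_zero 2 hx
  rw [hsq] at hne
  have h₁ : 0 < 1 - Real.cos x :=
    (sub_nonneg.2 (Real.cos_le_one x)).lt_of_ne' (left_ne_zero_of_mul hne)
  have h₂ : 0 < 1 + Real.cos x :=
    (by linarith [Real.neg_one_le_cos x] : 0 ≤ 1 + Real.cos x).lt_of_ne' (right_ne_zero_of_mul hne)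
  have hd₁ := ((Real.hasDerivAt_cos x).const_sub 1).rpow_const (p := α + 1 / 2) (Or.inl h₁.ne')
  have hd₂ := ((Real.hasDerivAt_cos x).const_add 1).rpow_const (p := β + 1 / 2) (Or.inl h₂.ne')
  refine (hd₁.mul hd₂).congr_deriv ?_
  rw [jacobiWeight, jacobiWeightLogDeriv, Real.rpow_sub_one h₁.ne', Real.rpow_sub_one h₂.ne',
    div_mul_eq_mul_div, eq_div_iff hx]
  field_simp
  rw [hsq]
  ring

lemma abs_sin_mul_jacobiWeight (hα : -1 < α) (hβ : -1 < β) (x : ℝ) :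
    |Real.sin x| * jacobiWeight α β x
      = (1 - Real.cos x) ^ (α + 1) * (1 + Real.cos x) ^ (β + 1) := by
  have h₁ : 0 ≤ 1 - Real.cos x := sub_nonneg.2 (Real.cos_le_one x)
  have h₂ : 0 ≤ 1 + Real.cos x := by linarith [Real.neg_one_le_cos x]
  have hsin : |Real.sin x| = (1 - Real.cos x) ^ (1 / 2 : ℝ) * (1 + Real.cos x) ^ (1 / 2 : ℝ) := by
    rw [Real.abs_sin_eq_sqrt_one_sub_cos_sq, ← Real.mul_rpow h₁ h₂, ← Real.sqrt_eq_rpow]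
    congr 1
    ring
  rw [show α + 1 = 1 / 2 + (α + 1 / 2) by ring, show β + 1 = 1 / 2 + (β + 1 / 2) by ring,
    Real.rpow_add' h₁ (by linarith), Real.rpow_add' h₂ (by linarith), hsin, jacobiWeight]
  ring

lemma continuous_abs_sin_mul_jacobiWeight (hα : -1 < α) (hβ : -1 < β) :
    Continuous fun x => |Real.sin x| * jacobiWeight α β x := by
  simp only [abs_sin_mul_jacobiWeight hα hβ]
  exact ((by fun_prop : Continuous fun x => 1 - Real.cos x).rpow_const
    fun _ => Or.inr (by linarith)).mul
    ((by fun_prop : Continuous fun x => 1 + Real.cos x).rpow_const fun _ => Or.inr (by linarith))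

end JacobiWeight

/-! ### Integrability -/

section Integrability

lemma exp_mul_I_mem_sphere (θ : ℝ) : exp (θ * I) ∈ Metric.sphere (0 : ℂ) 1 :=
  mem_sphere_zero_iff_norm.2 (Complex.norm_exp_ofReal_mul_I θ)

lemma exists_lipschitzOnWith_sphere {f : ℂ → ℂ} (hf : AnalyticOnNhd ℂ f (Metric.sphere 0 1)) :
    ∃ K, LipschitzOnWith K f (Metric.sphere 0 1) := by
  refine LocallyLipschitzOn.exists_lipschitzOnWith_of_compact (isCompact_sphere 0 1) fun z hz => ?_
  obtain ⟨K, s, hs, hK⟩ := (hf z hz).contDiffAt (n := 1).exists_lipschitzOnWith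
  exact ⟨K, s, mem_nhdsWithin_of_mem_nhds hs, hK⟩

-- The Lipschitz bound for `f (ω / z) - f z` cancels the pole of the coefficient at `z ^ 2 = ω`.
lemma norm_dunklCoeff_mul_sub_le (α β : ℝ) (N : ℕ) {f : ℂ → ℂ} {K : NNReal}
    (hf : LipschitzOnWith K f (Metric.sphere 0 1)) {ω z : ℂ} (hω : ‖ω‖ = 1) (hz : ‖z‖ = 1) :
    ‖dunklCoeff α β N ω z * (f (ω / z) - f z)‖
      ≤ (‖(α + β + 1 : ℂ)‖ + ‖(α - β : ℂ)‖) * K := by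
  have hz0 := ne_zero_of_norm_eq_one hz
  have hnum : ‖(α + β + 1) * z ^ 2 + (α - β) * ω ^ ((N + 1) / 2) * z ^ (2 - N % 2)‖
      ≤ ‖(α + β + 1 : ℂ)‖ + ‖(α - β : ℂ)‖ := by
    refine (norm_add_le _ _).trans_eq ?_
    simp only [norm_mul, norm_pow, hω, hz, one_pow, mul_one]
  have hsub : ‖f (ω / z) - f z‖ ≤ K * ‖ω - z ^ 2‖ := by
    refine (hf.norm_sub_le (by simp [hω, hz]) (by simp [hz])).trans_eq ?_
    rw [show ω / z - z = (ω - z ^ 2) / z by field_simp, norm_div, hz, div_one]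
  rw [dunklCoeff, norm_mul, norm_div]
  rcases (norm_nonneg (ω - z ^ 2)).eq_or_lt with hd | hd
  · rw [← hd, div_zero, zero_mul]
    positivity
  · calc _ ≤ (‖(α + β + 1 : ℂ)‖ + ‖(α - β : ℂ)‖) / ‖ω - z ^ 2‖ * (K * ‖ω - z ^ 2‖) := by gcongr
      _ = (‖(α + β + 1 : ℂ)‖ + ‖(α - β : ℂ)‖) * K := by field_simp

lemma intervalIntegrable_jacobiWeight_mul {α β : ℝ} (hα : -1 < α) (hβ : -1 < β) {ν : ℝ}
    (hν : ν ≠ 0) (a b : ℝ) :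
    IntervalIntegrable (fun θ => (jacobiWeight α β (ν * θ) : ℂ)) volume a b := by
  have := (intervalIntegrable_jacobiWeight hα hβ (ν * a) (ν * b)).comp_mul_left (c := ν)
  rw [mul_div_cancel_left₀ a hν, mul_div_cancel_left₀ b hν] at this
  exact ⟨this.1.ofReal, this.2.ofReal⟩

lemma intervalIntegrable_Lop_mul_jacobiWeight {α β : ℝ} (hα : -1 < α) (hβ : -1 < β) {N : ℕ}
    [NeZero N] {f : ℂ → ℂ} (hf : AnalyticOnNhd ℂ f (Metric.sphere 0 1)) (a b : ℝ) :
    IntervalIntegrable (fun θ : ℝ =>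
      Lop α β N f (exp (θ * I)) * (jacobiWeight α β (N * θ) : ℂ)) volume a b := by
  have hW := intervalIntegrable_jacobiWeight_mul hα hβ (NeZero.ne (N : ℝ)) a b
  have hcont : Continuous fun θ : ℝ => exp (θ * I) := by fun_prop
  have heuler : Continuous fun θ : ℝ => exp (θ * I) * deriv f (exp (θ * I)) :=
    hcont.mul (hf.deriv.continuousOn.comp_continuous hcont exp_mul_I_mem_sphere)
  obtain ⟨K, hK⟩ := exists_lipschitzOnWith_sphere hf
  have hreflect (ω : rootsOfUnity N ℂ) : IntervalIntegrable (fun θ : ℝ =>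
      dunklCoeff α β N (ω : ℂˣ) (exp (θ * I)) * (f ((ω : ℂˣ) / exp (θ * I)) - f (exp (θ * I)))
        * (jacobiWeight α β (N * θ) : ℂ)) volume a b := by
    have hfω : Continuous fun θ : ℝ => f ((ω : ℂˣ) / exp (θ * I)) :=
      hf.continuousOn.comp_continuous (continuous_const.div hcont fun _ => Complex.exp_ne_zero _)
        fun θ => by simp [norm_coe_rootsOfUnity, Complex.norm_exp_ofReal_mul_I]
    have hfθ : Continuous fun θ : ℝ => f (exp (θ * I)) :=
      hf.continuousOn.comp_continuous hcont exp_mul_I_mem_sphere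
    have hmeas : Measurable fun θ : ℝ => dunklCoeff α β N (ω : ℂˣ) (exp (θ * I)) := by
      unfold dunklCoeff
      fun_prop
    exact intervalIntegrable_iff.2 (hW.def'.bdd_mul
      (hmeas.mul (hfω.sub hfθ).measurable).aestronglyMeasurable
      (ae_of_all _ fun θ => norm_dunklCoeff_mul_sub_le α β N hK (norm_coe_rootsOfUnity ω)
        (Complex.norm_exp_ofReal_mul_I θ)))
  simp only [Lop_eq_add_sum, add_mul, sum_mul]
  exact (hW.continuousOn_mul heuler.continuousOn).add
    (by simpa only [sum_fn] using IntervalIntegrable.sum univ fun ω _ => hreflect ω)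

end Integrability

/-! ### Symmetrization of integrals over the circle -/

lemma exp_mul_I_mul_exp_mul_I (c θ : ℝ) : exp (c * I) * exp (θ * I) = exp ((θ + c : ℝ) * I) := by
  rw [← Complex.exp_add]
  push_cast
  ring_nf

lemma exp_mul_I_div_exp_mul_I (c θ : ℝ) : exp (c * I) / exp (θ * I) = exp ((c - θ : ℝ) * I) := by
  rw [← Complex.exp_sub]
  push_cast
  ring_nf

lemma exp_mul_I_periodic : Function.Periodic (fun θ : ℝ => exp (θ * I)) (2 * Real.pi) := fun θ => by
  push_cast
  rw [add_mul, Complex.exp_add, Complex.exp_two_pi_mul_I, mul_one]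

section Symmetrization

variable {N : ℕ} [NeZero N]

lemma exists_coe_rootsOfUnity_eq_exp (ζ : rootsOfUnity N ℂ) :
    ∃ j : ℕ, ((ζ : ℂˣ) : ℂ) = exp ((j * (2 * Real.pi / N) : ℝ) * I) := by
  obtain ⟨j, -, hj⟩ := (Complex.mem_rootsOfUnity N ζ).1 ζ.2
  refine ⟨j, hj.symm.trans ?_⟩
  push_cast
  ring_nf

variable {w : ℝ → ℂ}

lemma comp_exp_mul_periodic (hper : Function.Periodic w (2 * Real.pi / N)) (φ : ℂ → ℂ) :
    Function.Periodic (fun θ : ℝ => φ (exp (θ * I)) * w θ) (2 * Real.pi) := by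
  have := hper.nat_mul N
  rw [mul_div_cancel₀ _ (NeZero.ne (N : ℝ))] at this
  exact (exp_mul_I_periodic.comp φ).mul this

lemma exists_orbit_eq_comp_shift (hper : Function.Periodic w (2 * Real.pi / N))
    (heven : Function.Even w) (φ : ℂ → ℂ) (ζ : rootsOfUnity N ℂ) :
    ∃ c : ℝ, ∀ θ : ℝ,
      φ ((ζ : ℂˣ) * exp (θ * I)) * w θ = φ (exp ((θ + c : ℝ) * I)) * w (θ + c) ∧
      φ ((ζ : ℂˣ) / exp (θ * I)) * w θ = φ (exp ((c - θ : ℝ) * I)) * w (c - θ) := by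
  obtain ⟨j, hj⟩ := exists_coe_rootsOfUnity_eq_exp ζ
  have hw := hper.nat_mul j
  refine ⟨j * (2 * Real.pi / N), fun θ => ⟨?_, ?_⟩⟩
  · rw [hj, exp_mul_I_mul_exp_mul_I, hw]
  · rw [hj, exp_mul_I_div_exp_mul_I, sub_eq_neg_add _ θ, hw, heven]

lemma intervalIntegrable_dihedralSum_mul (hper : Function.Periodic w (2 * Real.pi / N))
    (heven : Function.Even w) {φ : ℂ → ℂ}
    (hφ : ∀ a b, IntervalIntegrable (fun θ : ℝ => φ (exp (θ * I)) * w θ) volume a b) (a b : ℝ) :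
    IntervalIntegrable (fun θ : ℝ => dihedralSum (rootsOfUnity N ℂ) φ (exp (θ * I)) * w θ)
      volume a b := by
  simp only [dihedralSum, sum_mul, add_mul]
  suffices h : ∀ ζ : rootsOfUnity N ℂ, IntervalIntegrable (fun θ : ℝ =>
      φ ((ζ : ℂˣ) * exp (θ * I)) * w θ + φ ((ζ : ℂˣ) / exp (θ * I)) * w θ) volume a b by
    simpa only [sum_fn] using IntervalIntegrable.sum univ fun ζ _ => h ζ
  intro ζ
  obtain ⟨c, hc⟩ := exists_orbit_eq_comp_shift hper heven φ ζ
  simp only [hc]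
  exact .add (by simpa using (hφ (a + c) (b + c)).comp_add_right c)
    (by simpa using (hφ (c - a) (c - b)).comp_sub_left c)

lemma integral_dihedralSum_mul (hper : Function.Periodic w (2 * Real.pi / N))
    (heven : Function.Even w) {φ : ℂ → ℂ}
    (hφ : ∀ a b, IntervalIntegrable (fun θ : ℝ => φ (exp (θ * I)) * w θ) volume a b) :
    ∫ θ in (0 : ℝ)..2 * Real.pi, dihedralSum (rootsOfUnity N ℂ) φ (exp (θ * I)) * w θ
      = 2 * N * ∫ θ in (0 : ℝ)..2 * Real.pi, φ (exp (θ * I)) * w θ := by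
  set F : ℝ → ℂ := fun θ => φ (exp (θ * I)) * w θ with hF
  have hFper : Function.Periodic F (2 * Real.pi) := comp_exp_mul_periodic hper φ
  have hadd (c : ℝ) :
      ∫ θ in (0 : ℝ)..2 * Real.pi, F (θ + c) = ∫ θ in (0 : ℝ)..2 * Real.pi, F θ := by
    rw [intervalIntegral.integral_comp_add_right, zero_add, add_comm,
      hFper.intervalIntegral_add_eq c 0, zero_add]
  have hsub (c : ℝ) :
      ∫ θ in (0 : ℝ)..2 * Real.pi, F (c - θ) = ∫ θ in (0 : ℝ)..2 * Real.pi, F θ := by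
    have := hFper.intervalIntegral_add_eq (c - 2 * Real.pi) 0
    rw [intervalIntegral.integral_comp_sub_left, sub_zero]
    simpa using this
  have hintAdd (c : ℝ) : IntervalIntegrable (fun θ => F (θ + c)) volume 0 (2 * Real.pi) := by
    simpa using (hφ (0 + c) (2 * Real.pi + c)).comp_add_right c
  have hintSub (c : ℝ) : IntervalIntegrable (fun θ => F (c - θ)) volume 0 (2 * Real.pi) := by
    simpa using (hφ (c - 0) (c - 2 * Real.pi)).comp_sub_left c
  choose c hc using exists_orbit_eq_comp_shift hper heven φ
  have hcard : Fintype.card (rootsOfUnity N ℂ) = N := by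
    rw [← Nat.card_eq_fintype_card, Complex.card_rootsOfUnity]
  calc ∫ θ in (0 : ℝ)..2 * Real.pi, dihedralSum (rootsOfUnity N ℂ) φ (exp (θ * I)) * w θ
      = ∫ θ in (0 : ℝ)..2 * Real.pi, ∑ ζ : rootsOfUnity N ℂ, (F (θ + c ζ) + F (c ζ - θ)) := by
        simp only [dihedralSum, sum_mul, add_mul, hc, hF]
    _ = ∑ ζ : rootsOfUnity N ℂ, 2 * ∫ θ in (0 : ℝ)..2 * Real.pi, F θ := by
        rw [intervalIntegral.integral_finsetSum fun ζ _ => (hintAdd (c ζ)).add (hintSub (c ζ))]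
        refine sum_congr rfl fun ζ _ => ?_
        rw [intervalIntegral.integral_add (hintAdd (c ζ)) (hintSub (c ζ)), hadd, hsub]
        exact (two_mul _).symm
    _ = 2 * N * ∫ θ in (0 : ℝ)..2 * Real.pi, F θ := by
        rw [sum_const, card_univ, hcard, nsmul_eq_mul]
        ring

end Symmetrization

/-! ### The differential part -/

section CircleDerivatives

lemma exp_mul_I_pow (N : ℕ) (θ : ℝ) :
    exp (θ * I) ^ N = (Real.cos (N * θ) : ℂ) + (Real.sin (N * θ) : ℂ) * I := by
  rw [← Complex.exp_nat_mul, ← mul_assoc, Complex.exp_mul_I]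
  push_cast
  rfl

lemma exp_mul_I_pow_two_mul_sub_one (N : ℕ) (θ : ℝ) :
    exp (θ * I) ^ (2 * N) - 1 = exp (θ * I) ^ N * (2 * I * Real.sin (N * θ)) := by
  have hsq : (Real.sin (N * θ) : ℂ) ^ 2 + (Real.cos (N * θ) : ℂ) ^ 2 = 1 := by
    exact_mod_cast Real.sin_sq_add_cos_sq (N * θ)
  rw [mul_comm 2, pow_mul, exp_mul_I_pow]
  linear_combination (-(Real.sin (N * θ) : ℂ) ^ 2) * Complex.I_sq + hsq

lemma exp_mul_I_pow_two_mul_eq_one_iff {N : ℕ} {θ : ℝ} :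
    exp (θ * I) ^ (2 * N) = 1 ↔ Real.sin (N * θ) = 0 := by
  simp [← sub_eq_zero (b := (1 : ℂ)), exp_mul_I_pow_two_mul_sub_one, -Complex.ofReal_sin]

lemma I_mul_Bfun_sub_Bfun_inv (α β : ℝ) {N : ℕ} {θ : ℝ} (hθ : Real.sin (N * θ) ≠ 0) :
    I * (Bfun α β N (exp (θ * I)) - Bfun α β N (exp (θ * I))⁻¹)
      = N * jacobiWeightLogDeriv α β (N * θ) := by
  have hB : Bfun α β N (exp (θ * I)) =
      N * ((α + β + 1) * exp (θ * I) ^ N + (α - β)) / (2 * I * Real.sin (N * θ)) := by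
    have := pow_ne_zero N (Complex.exp_ne_zero (θ * I))
    rw [Bfun, exp_mul_I_pow_two_mul_sub_one, mul_comm 2, pow_mul]
    field_simp
  rw [← conj_Bfun α β N (Complex.norm_exp_ofReal_mul_I θ), hB, exp_mul_I_pow]
  have hs : (Real.sin (N * θ) : ℂ) ≠ 0 := by exact_mod_cast hθ
  simp only [jacobiWeightLogDeriv, map_div₀, map_mul, map_add, map_sub, map_one, map_natCast,
    map_ofNat, Complex.conj_ofReal, Complex.conj_I, Complex.ofReal_div, Complex.ofReal_add,
    Complex.ofReal_mul, Complex.ofReal_sub, Complex.ofReal_one]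
  generalize (Real.sin (N * θ) : ℂ) = s at *
  have hI := Complex.I_ne_zero
  field_simp
  ring

lemma hasDerivAt_mul_conj_comp_exp {f g : ℂ → ℂ} {θ : ℝ} (hf : DifferentiableAt ℂ f (exp (θ * I)))
    (hg : DifferentiableAt ℂ g (exp (θ * I))) :
    HasDerivAt (fun θ : ℝ => f (exp (θ * I)) * conj (g (exp (θ * I))))
      (I * symmDefect eulerOp f g (exp (θ * I))) θ := by
  have hexp : HasDerivAt (fun θ : ℝ => exp (θ * I)) (exp (θ * I) * I) θ := by
    simpa using ((Complex.ofRealCLM.hasDerivAt (x := θ)).mul_const I).cexp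
  refine ((hf.hasDerivAt.comp θ hexp).mul (hg.hasDerivAt.comp θ hexp).star).congr_deriv ?_
  simp only [symmDefect, eulerOp, star_mul', Complex.star_def, map_mul, Complex.conj_I,
    Function.comp_def]
  ring

variable {N : ℕ} [NeZero N]

lemma hasDerivAt_dihedralAltSum_mul_conj {f g : ℂ → ℂ}
    (hf : ∀ z ∈ Metric.sphere (0 : ℂ) 1, DifferentiableAt ℂ f z)
    (hg : ∀ z ∈ Metric.sphere (0 : ℂ) 1, DifferentiableAt ℂ g z) (θ : ℝ) :
    HasDerivAt (fun θ : ℝ =>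
        dihedralAltSum (rootsOfUnity N ℂ) (fun w => f w * conj (g w)) (exp (θ * I)))
      (I * dihedralSum (rootsOfUnity N ℂ) (symmDefect eulerOp f g) (exp (θ * I))) θ := by
  have hcircle (t : ℝ) := hasDerivAt_mul_conj_comp_exp (hf _ (exp_mul_I_mem_sphere t))
    (hg _ (exp_mul_I_mem_sphere t))
  simp only [dihedralAltSum, dihedralSum, mul_sum]
  refine HasDerivAt.fun_sum fun ζ _ => ?_
  obtain ⟨j, hj⟩ := exists_coe_rootsOfUnity_eq_exp ζ
  simp only [hj, exp_mul_I_mul_exp_mul_I, exp_mul_I_div_exp_mul_I]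
  set c := j * (2 * Real.pi / N)
  refine (((hcircle (θ + c)).comp_add_const θ c).sub
    ((hcircle (c - θ)).comp_const_sub c θ)).congr_deriv ?_
  ring

lemma dihedralAltSum_exp_eq_zero {θ : ℝ} (hθ : Real.sin (N * θ) = 0) (φ : ℂ → ℂ) :
    dihedralAltSum (rootsOfUnity N ℂ) φ (exp (θ * I)) = 0 := by
  have hmem : (exp (θ * I) ^ 2) ^ N = 1 := by
    rw [← pow_mul]
    exact exp_mul_I_pow_two_mul_eq_one_iff.2 hθ
  exact dihedralAltSum_eq_zero_of_sq_mem (ω := rootsOfUnity.mkOfPowEq _ hmem) (by simp) φ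

end CircleDerivatives

section IntegrationByParts

variable {α β ν : ℝ} {F : ℝ → ℂ}

lemma isTheta_sin_mul (hν : ν ≠ 0) {t : ℝ} (ht : Real.sin (ν * t) = 0) :
    (fun x => Real.sin (ν * x)) =Θ[𝓝 t] fun x => x - t := by
  have hderiv : HasDerivAt (fun x => Real.sin (ν * x)) (Real.cos (ν * t) * ν) t := by
    simpa using ((hasDerivAt_id t).const_mul ν).sin
  have hcos : Real.cos (ν * t) ≠ 0 := fun hc => by
    simpa [ht, hc] using Real.sin_sq_add_cos_sq (ν * t)
  simpa [prod_pure, IsTheta, ht, Function.comp_def] using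
    HasDerivAtFilter.isTheta_sub hderiv (mul_ne_zero hcos hν)

lemma hasDerivAt_mul_jacobiWeight {F' : ℂ} {t : ℝ} (hF : HasDerivAt F F' t)
    (ht : Real.sin (ν * t) ≠ 0) :
    HasDerivAt (fun x => F x * (jacobiWeight α β (ν * x) : ℂ))
      ((F' + ν * jacobiWeightLogDeriv α β (ν * t) * F t) * (jacobiWeight α β (ν * t) : ℂ)) t := by
  have hW := ((hasDerivAt_jacobiWeight (α := α) (β := β) ht).comp t
    ((hasDerivAt_id t).const_mul ν)).ofReal_comp
  refine (hF.mul hW).congr_deriv ?_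
  push_cast
  simp only [Function.comp_def]
  ring

-- The zeros of `sin (ν * x)` are simple, so `F` is `O(sin (ν * x))` near each of them.
lemma continuous_mul_jacobiWeight (hα : -1 < α) (hβ : -1 < β) (hν : ν ≠ 0)
    (hF : Differentiable ℝ F) (hF0 : ∀ t, Real.sin (ν * t) = 0 → F t = 0) :
    Continuous fun t => F t * (jacobiWeight α β (ν * t) : ℂ) := by
  refine continuous_iff_continuousAt.2 fun t => ?_
  by_cases ht : Real.sin (ν * t) = 0
  · have hFsin : F =O[𝓝 t] fun x => |Real.sin (ν * x)| := by
      have := (hF t).hasDerivAt.isBigO_sub.trans (isTheta_sin_mul hν ht).isBigO_symm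
      simpa [hF0 t ht] using this
    have hprod : (fun x => F x * (jacobiWeight α β (ν * x) : ℂ)) =O[𝓝 t]
        fun x => |Real.sin (ν * x)| * jacobiWeight α β (ν * x) :=
      hFsin.mul (Complex.isBigO_ofReal_left.2 (isBigO_refl _ _))
    have hlim : Tendsto (fun x => |Real.sin (ν * x)| * jacobiWeight α β (ν * x)) (𝓝 t) (𝓝 0) := by
      simpa [ht, Function.comp_def] using
        ((continuous_abs_sin_mul_jacobiWeight hα hβ).comp (continuous_const_mul ν)).tendsto t
    rw [ContinuousAt, hF0 t ht, zero_mul]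
    exact hprod.trans_tendsto hlim
  · exact (hasDerivAt_mul_jacobiWeight (hF t).hasDerivAt ht).continuousAt

lemma countable_sin_mul_eq_zero (hν : ν ≠ 0) : {t : ℝ | Real.sin (ν * t) = 0}.Countable := by
  refine (Set.countable_range fun n : ℤ => n * Real.pi / ν).mono fun t ht => ?_
  obtain ⟨n, hn⟩ := Real.sin_eq_zero_iff.1 ht
  exact ⟨n, by simp [hn, hν]⟩

end IntegrationByParts

/-! ### Symmetry -/

section Symmetry

variable {α β : ℝ} {N : ℕ} [NeZero N] {f g : ℂ → ℂ}

lemma intervalIntegrable_Lop_mul_conj (hα : -1 < α) (hβ : -1 < β)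
    (hf : AnalyticOnNhd ℂ f (Metric.sphere 0 1)) (hg : ContinuousOn g (Metric.sphere 0 1))
    (a b : ℝ) :
    IntervalIntegrable (fun θ : ℝ => Lop α β N f (exp (θ * I)) * conj (g (exp (θ * I)))
      * (jacobiWeight α β (N * θ) : ℂ)) volume a b := by
  have hgθ : Continuous fun θ : ℝ => conj (g (exp (θ * I))) :=
    Complex.continuous_conj.comp (hg.comp_continuous (by fun_prop) exp_mul_I_mem_sphere)
  simpa only [mul_right_comm] using
    (intervalIntegrable_Lop_mul_jacobiWeight hα hβ (N := N) hf a b).mul_continuousOn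
      hgθ.continuousOn

lemma intervalIntegrable_mul_conj_Lop (hα : -1 < α) (hβ : -1 < β)
    (hf : ContinuousOn f (Metric.sphere 0 1)) (hg : AnalyticOnNhd ℂ g (Metric.sphere 0 1))
    (a b : ℝ) :
    IntervalIntegrable (fun θ : ℝ => f (exp (θ * I)) * conj (Lop α β N g (exp (θ * I)))
      * (jacobiWeight α β (N * θ) : ℂ)) volume a b := by
  have := intervalIntegrable_Lop_mul_conj (N := N) hα hβ hg hf a b
  have hconj := And.intro (Complex.conjCLE.toContinuousLinearMap.integrable_comp this.1)
    (Complex.conjCLE.toContinuousLinearMap.integrable_comp this.2)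
  simpa [IntervalIntegrable, IntegrableOn, Function.comp_def, mul_comm] using hconj

lemma integral_dihedralSum_symmDefect_Lop_eq_zero (hα : -1 < α) (hβ : -1 < β)
    (hf : AnalyticOnNhd ℂ f (Metric.sphere 0 1)) (hg : AnalyticOnNhd ℂ g (Metric.sphere 0 1))
    (hint : IntervalIntegrable (fun θ : ℝ =>
      dihedralSum (rootsOfUnity N ℂ) (symmDefect (Lop α β N) f g) (exp (θ * I))
        * (jacobiWeight α β (N * θ) : ℂ)) volume 0 (2 * Real.pi)) :
    ∫ θ in (0 : ℝ)..2 * Real.pi,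
      dihedralSum (rootsOfUnity N ℂ) (symmDefect (Lop α β N) f g) (exp (θ * I))
        * (jacobiWeight α β (N * θ) : ℂ) = 0 := by
  set O : ℝ → ℂ := fun θ =>
    dihedralAltSum (rootsOfUnity N ℂ) (fun w => f w * conj (g w)) (exp (θ * I))
  have hO := hasDerivAt_dihedralAltSum_mul_conj (N := N) (fun z hz => (hf z hz).differentiableAt)
    (fun z hz => (hg z hz).differentiableAt)
  have hO0 (θ : ℝ) (hθ : Real.sin (N * θ) = 0) : O θ = 0 := dihedralAltSum_exp_eq_zero hθ _
  have hN : (N : ℝ) ≠ 0 := NeZero.ne _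
  have hderiv (θ : ℝ) (hθ : Real.sin (N * θ) ≠ 0) :
      HasDerivAt (fun θ => O θ * (jacobiWeight α β (N * θ) : ℂ))
        (I * (dihedralSum (rootsOfUnity N ℂ) (symmDefect (Lop α β N) f g) (exp (θ * I))
          * (jacobiWeight α β (N * θ) : ℂ))) θ := by
    refine (hasDerivAt_mul_jacobiWeight (hO θ) hθ).congr_deriv ?_
    rw [dihedralSum_symmDefect_Lop α β f g (Complex.norm_exp_ofReal_mul_I θ)
      (mt exp_mul_I_pow_two_mul_eq_one_iff.1 hθ), Complex.ofReal_natCast,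
      ← I_mul_Bfun_sub_Bfun_inv α β hθ]
    ring
  have hftc := integral_eq_of_hasDerivAt_off_countable
    (fun θ => O θ * (jacobiWeight α β (N * θ) : ℂ)) _ (countable_sin_mul_eq_zero hN)
    (continuous_mul_jacobiWeight hα hβ hN (fun θ => (hO θ).differentiableAt) hO0).continuousOn
    (fun θ hθ => hderiv θ hθ.2) (hint.const_mul I)
  have hsin : Real.sin (N * (2 * Real.pi)) = 0 := by
    simpa [mul_assoc] using Real.sin_nat_mul_pi (N * 2)
  rw [intervalIntegral.integral_const_mul, hO0 _ hsin, hO0 0 (by simp), zero_mul, zero_mul,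
    sub_zero] at hftc
  exact (mul_eq_zero.1 hftc).resolve_left Complex.I_ne_zero

theorem stmt_13_general (hα : -1 < α) (hβ : -1 < β)
    (hf : AnalyticOnNhd ℂ f (Metric.sphere 0 1)) (hg : AnalyticOnNhd ℂ g (Metric.sphere 0 1)) :
    ∫ θ in (0 : ℝ)..2 * Real.pi, Lop α β N f (exp (θ * I)) * conj (g (exp (θ * I)))
        * (jacobiWeight α β (N * θ) : ℂ)
      = ∫ θ in (0 : ℝ)..2 * Real.pi, f (exp (θ * I)) * conj (Lop α β N g (exp (θ * I)))
        * (jacobiWeight α β (N * θ) : ℂ) := by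
  have hleft := intervalIntegrable_Lop_mul_conj (N := N) hα hβ hf hg.continuousOn
  have hright := intervalIntegrable_mul_conj_Lop (N := N) hα hβ hf.continuousOn hg
  have hdefect (a b : ℝ) : IntervalIntegrable (fun θ : ℝ =>
      symmDefect (Lop α β N) f g (exp (θ * I)) * (jacobiWeight α β (N * θ) : ℂ)) volume a b := by
    simpa only [symmDefect, sub_mul] using (hleft a b).sub (hright a b)
  have hper : Function.Periodic (fun θ : ℝ => (jacobiWeight α β (N * θ) : ℂ))
      (2 * Real.pi / N) := fun θ => by
    simp [mul_add, mul_div_cancel₀ _ (NeZero.ne (N : ℝ)), jacobiWeight_periodic α β _]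
  have heven : Function.Even fun θ : ℝ => (jacobiWeight α β (N * θ) : ℂ) := fun θ => by
    simp [jacobiWeight_even α β _]
  have horbit := integral_dihedralSum_symmDefect_Lop_eq_zero hα hβ hf hg
    (intervalIntegrable_dihedralSum_mul hper heven hdefect 0 (2 * Real.pi))
  rw [integral_dihedralSum_mul hper heven hdefect] at horbit
  have hzero := (mul_eq_zero.1 horbit).resolve_left
    (mul_ne_zero two_ne_zero (NeZero.ne (N : ℂ)))
  rw [← sub_eq_zero, ← intervalIntegral.integral_sub (hleft _ _) (hright _ _), ← hzero]
  simp only [symmDefect, sub_mul]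

end Symmetry

lemma sphere_zero_one_subset_compl_zero : Metric.sphere (0 : ℂ) 1 ⊆ {0}ᶜ := fun _ hz =>
  ne_zero_of_norm_eq_one (mem_sphere_zero_iff_norm.1 hz)

lemma IsLaurentPoly.analyticOnNhd {f : ℂ → ℂ} (hf : IsLaurentPoly f) :
    AnalyticOnNhd ℂ f {0}ᶜ := by
  obtain ⟨m, p, hp⟩ := hf
  intro z hz
  have hquot : AnalyticAt ℂ (fun w => p.eval w / w ^ m) z :=
    (AnalyticOnNhd.eval_polynomial p z (Set.mem_univ z)).div (analyticAt_id.pow m)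
      (pow_ne_zero m hz)
  exact hquot.congr ((isOpen_compl_singleton.eventually_mem hz).mono fun w hw => (hp w hw).symm)

/-- the operator L(N) is symmetric with respect to the weight
ρ(θ;N) = (1 - cos Nθ)^{α+1/2} (1 + cos Nθ)^{β+1/2} on the unit circle. -/
theorem stmt_13 (α β : ℝ) (hα : -1 < α) (hβ : -1 < β) (N : ℕ) (hN : 1 ≤ N)
    (f g : ℂ → ℂ) (hf : IsLaurentPoly f) (hg : IsLaurentPoly g) :
    ∫ θ in (0:ℝ)..(2 * Real.pi),
        Lop α β N f (Complex.exp (θ * Complex.I))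
          * (starRingEnd ℂ) (g (Complex.exp (θ * Complex.I)))
          * (((1 - Real.cos (N * θ)) ^ (α + 1 / 2)
              * (1 + Real.cos (N * θ)) ^ (β + 1 / 2) : ℝ) : ℂ)
      = ∫ θ in (0:ℝ)..(2 * Real.pi),
          f (Complex.exp (θ * Complex.I))
            * (starRingEnd ℂ) (Lop α β N g (Complex.exp (θ * Complex.I)))
            * (((1 - Real.cos (N * θ)) ^ (α + 1 / 2)
                * (1 + Real.cos (N * θ)) ^ (β + 1 / 2) : ℝ) : ℂ) := by
  have : NeZero N := ⟨by omega⟩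
  exact stmt_13_general hα hβ (hf.analyticOnNhd.mono sphere_zero_one_subset_compl_zero)
    (hg.analyticOnNhd.mono sphere_zero_one_subset_compl_zero)
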